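/- Let m ≥ 2, N ≥ 1, let L : (ℂ^N)^m → ℂ be a symmetric m-linear form and P(z) = L(z,…,z). For a multi-index β ∈ ℕ₀^N with |β| = m-1 write C_β = (m-1)!/ (β₁!⋯β_N!) and let L(e^β, e_j) denote L evaluated at the standard basis vector e_r repeated β_r times (r = 1,…,N, in any order, by symmetry) and e_j in the last argument. Then ∑_{j=1}^N ( ∑_{β ∈ ℕ₀^N, |β|=m-1} C_β² |L(e^β, e_j)|² / ∏_{r=1}^N (β_r+1) )^{1/2} ≤ (m/(m-1))^{m-1} · sup_{z ∈ closed unit polydisc of ℂ^N} |P(z)|. -/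

import Mathlib

open Finset

lemma kie_half_sq (x : ℂ) : x ^ ((2:ℂ)⁻¹) * x ^ ((2:ℂ)⁻¹) = x := by
  rw [← sq]; exact Complex.cpow_nat_inv_pow x two_ne_zero

/-- A polynomial factors as `u v` with `|u| = |v|` on the unit circle. -/
def KieFac (f : ℂ → ℂ) : Prop := ∃ u v : ℂ → ℂ, DiffContOnCl ℂ u (Metric.ball 0 1) ∧
  DiffContOnCl ℂ v (Metric.ball 0 1) ∧ (∀ z ∈ Metric.closedBall (0:ℂ) 1, f z = u z * v z) ∧
  ∀ z ∈ Metric.sphere (0:ℂ) 1, ‖u z‖ = ‖v z‖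

lemma KieFac.mul {f g : ℂ → ℂ} (hf : KieFac f) (hg : KieFac g) : KieFac (fun z => f z * g z) := by
  obtain ⟨u, v, hu, hv, h1, h2⟩ := hf
  obtain ⟨u', v', hu', hv', h1', h2'⟩ := hg
  refine ⟨fun z => u z * u' z, fun z => v z * v' z, ?_, ?_, ?_, ?_⟩
  · exact hu.smul hu'
  · exact hv.smul hv'
  · intro z hz; simp only [h1 z hz, h1' z hz]; ring
  · intro z hz; simp only [norm_mul, h2 z hz, h2' z hz]

lemma KieFac.const (c : ℂ) : KieFac (fun _ => c) :=
  ⟨fun _ => c ^ ((2:ℂ)⁻¹), fun _ => c ^ ((2:ℂ)⁻¹), diffContOnCl_const, diffContOnCl_const,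
    fun _ _ => (kie_half_sq c).symm, fun _ _ => rfl⟩

lemma kie_re_pos {w : ℂ} (h : ‖w‖ < 1) : 0 < (1 - w).re := by
  have := Complex.re_le_norm w
  simp; linarith

lemma kie_re_nonneg {w : ℂ} (h : ‖w‖ ≤ 1) : 0 ≤ (1 - w).re := by
  have := Complex.re_le_norm w
  simp; linarith

lemma kie_sqrt_dc {b : ℂ} (hb : ‖b‖ ≤ 1) :
    DiffContOnCl ℂ (fun z => (1 - b * z) ^ ((2:ℂ)⁻¹)) (Metric.ball 0 1) := by
  have half : 0 < ((2:ℂ)⁻¹).re := by norm_num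
  constructor
  · intro z hz
    have hz' : ‖z‖ < 1 := by simpa using hz
    have : ‖b * z‖ < 1 := by
      rw [norm_mul]; nlinarith [norm_nonneg z, norm_nonneg b]
    apply DifferentiableAt.differentiableWithinAt
    apply DifferentiableAt.cpow_const (by fun_prop)
    exact Or.inl (kie_re_pos this)
  · rw [closure_ball _ one_ne_zero]
    intro z hz
    have hz' : ‖z‖ ≤ 1 := by simpa using hz
    have : ‖b * z‖ ≤ 1 := by
      rw [norm_mul]; nlinarith [norm_nonneg z, norm_nonneg b]
    apply ContinuousAt.continuousWithinAt
    exact (Complex.continuousAt_cpow_const_of_re_pos (Or.inl (kie_re_nonneg this)) half).comp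
      (f := fun z => 1 - b * z) (by fun_prop)

lemma KieFac.linear (a : ℂ) : KieFac (fun z => z - a) := by
  rcases le_or_gt 1 ‖a‖ with ha | ha
  · have ha0 : a ≠ 0 := by rintro rfl; simp at ha; linarith
    have hb : ‖a⁻¹‖ ≤ 1 := by rw [norm_inv]; exact inv_le_one_of_one_le₀ ha
    have h : KieFac (fun z => 1 - a⁻¹ * z) :=
      ⟨_, _, kie_sqrt_dc hb, kie_sqrt_dc hb, fun _ _ => (kie_half_sq _).symm, fun _ _ => rfl⟩
    have := (KieFac.const (-a)).mul h
    convert this using 2 with z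
    field_simp
    ring
  · set b := (starRingEnd ℂ) a with hbdef
    have hb : ‖b‖ < 1 := by simpa [hbdef] using ha
    have hne : ∀ z : ℂ, ‖z‖ ≤ 1 → 1 - b * z ≠ 0 := by
      intro z hz h
      have : ‖b * z‖ < 1 := by
        rw [norm_mul]; nlinarith [norm_nonneg z, norm_nonneg b]
      have := kie_re_pos this
      rw [h] at this; simp at this
    have hs0 : ∀ z : ℂ, ‖z‖ ≤ 1 → (1 - b * z) ^ ((2:ℂ)⁻¹) ≠ 0 := by
      intro z hz h
      have := kie_half_sq (1 - b * z)
      rw [h] at this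
      exact hne z hz (by simpa using this.symm)
    have hs := kie_sqrt_dc hb.le
    refine ⟨fun z => (((1 - b * z) ^ ((2:ℂ)⁻¹))⁻¹) * (z - a), _, ?_, hs, ?_, ?_⟩
    · have h1 : DiffContOnCl ℂ (fun z => ((1 - b * z) ^ ((2:ℂ)⁻¹))⁻¹) (Metric.ball 0 1) := by
        apply hs.inv
        intro z hz
        rw [closure_ball _ one_ne_zero] at hz
        exact hs0 z (by simpa using hz)
      have h2 : DiffContOnCl ℂ (fun z : ℂ => z - a) (Metric.ball 0 1) :=
        (Differentiable.diffContOnCl (by fun_prop))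
      exact h1.smul h2
    · intro z hz
      have := hs0 z (by simpa using hz)
      simp only
      rw [mul_comm, ← mul_assoc, mul_inv_cancel₀ this, one_mul]
    · intro z hz
      have hz' : ‖z‖ = 1 := by simpa using hz
      have h0 := hs0 z hz'.le
      have h1 : ‖z - a‖ = ‖1 - b * z‖ := by
        have hzz : z * (starRingEnd ℂ) z = 1 := by
          rw [Complex.mul_conj, Complex.normSq_eq_norm_sq, hz']; simp
        have : z - a = z * (starRingEnd ℂ) (1 - b * z) := by
          simp [hbdef]; linear_combination a * hzz
        rw [this, norm_mul, hz', one_mul, RCLike.norm_conj]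
      have h2 : ‖z - a‖ = ‖(1 - b * z) ^ ((2:ℂ)⁻¹)‖ * ‖(1 - b * z) ^ ((2:ℂ)⁻¹)‖ := by
        rw [h1, ← norm_mul, kie_half_sq]
      have h3 := norm_ne_zero_iff.2 h0
      simp only [norm_mul, norm_inv, h2]
      field_simp

lemma KieFac.poly (p : Polynomial ℂ) : KieFac (fun z => p.eval z) := by
  have h := (IsAlgClosed.splits p).eq_prod_roots
  have key : ∀ s : Multiset ℂ, KieFac (fun z => ((s.map (fun a => Polynomial.X - Polynomial.C a)).prod).eval z) := by
    intro s
    induction s using Multiset.induction_on with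
    | empty => simpa using KieFac.const 1
    | cons a s ih => simpa using (KieFac.linear a).mul ih
  rw [h]
  simpa using (KieFac.const p.leadingCoeff).mul (key p.roots)

lemma kie_bessel {u : ℂ → ℂ} (hu : DiffContOnCl ℂ u (Metric.ball 0 1)) (d : ℕ) :
    ∑ k ∈ range d, ‖iteratedDeriv k u 0 / k.factorial‖ ^ 2 ≤
      Real.circleAverage (fun z => ‖u z‖ ^ 2) 0 1 := by
  have hcont : Continuous (fun θ : ℝ => u (circleMap 0 1 θ)) := by
    have := hu.continuousOn_ball
    refine this.comp_continuous (by fun_prop) (fun θ => ?_)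
    simp
  have hpi : (0:ℝ) < 2 * Real.pi := Real.two_pi_pos
  have hL2 : MeasureTheory.MemLp (fun θ : ℝ => u (circleMap 0 1 θ)) 2
      (MeasureTheory.volume.restrict (Set.Ioc 0 (2 * Real.pi))) := by
    obtain ⟨C, hC⟩ := (isCompact_closedBall (0:ℂ) 1).exists_bound_of_continuousOn
      hu.continuousOn_ball
    refine MeasureTheory.MemLp.of_bound hcont.aestronglyMeasurable C
      (Filter.Eventually.of_forall fun θ => hC _ (by simp))
  have hs := hasSum_sq_fourierCoeffOn hpi hL2
  have hcoef : ∀ k : ℕ, fourierCoeffOn hpi (fun θ : ℝ => u (circleMap 0 1 θ)) (k:ℤ) =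
      iteratedDeriv k u 0 / k.factorial := by
    intro k
    have h1 := DiffContOnCl.circleIntegral_one_div_sub_center_pow_smul one_pos k hu
    have h2 : iteratedDeriv k u 0 / k.factorial = (2 * Real.pi * Complex.I)⁻¹ *
       ∮ z in C(0, 1), (1 / (z - 0) ^ (k + 1)) • u z := by
      rw [h1]
      have : (Real.pi : ℂ) ≠ 0 := by exact_mod_cast Real.pi_ne_zero
      have : (k.factorial : ℂ) ≠ 0 := by exact_mod_cast k.factorial_ne_zero
      simp only [smul_eq_mul]
      field_simp
    rw [h2, fourierCoeffOn_eq_integral, circleIntegral]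
    simp only [Complex.real_smul, smul_eq_mul, deriv_circleMap]
    rw [← intervalIntegral.integral_const_mul, ← intervalIntegral.integral_const_mul]
    congr 1
    ext θ
    have : (Real.pi : ℂ) ≠ 0 := by exact_mod_cast Real.pi_ne_zero
    rw [fourier_coe_apply]
    simp only [circleMap, sub_zero, Complex.ofReal_one, one_mul, zero_add]
    have e : Complex.exp (2 * Real.pi * Complex.I * ((-(k:ℤ) : ℤ) : ℂ) * θ / ((2 * Real.pi : ℝ) : ℂ)) =
       (Complex.exp (θ * Complex.I) ^ k)⁻¹ := by
      rw [← Complex.exp_nat_mul, ← Complex.exp_neg]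
      congr 1
      push_cast
      field_simp
    rw [e]
    have := Complex.exp_ne_zero (θ * Complex.I)
    push_cast
    field_simp
    ring
  have hle : ∑ k ∈ (range d).map ⟨fun k : ℕ => (k:ℤ), Nat.cast_injective⟩, _ ≤ _ :=
    sum_le_hasSum _ (fun i _ => by positivity) hs
  rw [Finset.sum_map] at hle
  simp only [Function.Embedding.coeFn_mk, hcoef, sub_zero] at hle
  exact hle

lemma kie_conv {u v f : ℂ → ℂ} (hu : DiffContOnCl ℂ u (Metric.ball 0 1))
    (hv : DiffContOnCl ℂ v (Metric.ball 0 1))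
    (h : ∀ z ∈ Metric.closedBall (0:ℂ) 1, f z = u z * v z) (k : ℕ) :
    iteratedDeriv k f 0 / k.factorial = ∑ i ∈ range (k+1), (iteratedDeriv i u 0 / i.factorial) *
      (iteratedDeriv (k - i) v 0 / (k-i).factorial) := by
  have e : f =ᶠ[nhds 0] u * v := by
    filter_upwards [Metric.closedBall_mem_nhds (0:ℂ) one_pos] with z hz using h z hz
  have cu : ContDiffAt ℂ k u 0 :=
    (hu.differentiableOn.analyticAt (Metric.ball_mem_nhds 0 one_pos)).contDiffAt
  have cv : ContDiffAt ℂ k v 0 :=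
    (hv.differentiableOn.analyticAt (Metric.ball_mem_nhds 0 one_pos)).contDiffAt
  rw [e.iteratedDeriv_eq, iteratedDeriv_mul cu cv, Finset.sum_div]
  refine sum_congr rfl fun i hi => ?_
  have hi' : i ≤ k := by simpa [Nat.lt_succ_iff] using hi
  have := Nat.choose_mul_factorial_mul_factorial hi'
  have : (k.choose i : ℂ) * i.factorial * (k-i).factorial = k.factorial := by exact_mod_cast this
  have h1 : (i.factorial : ℂ) ≠ 0 := by exact_mod_cast i.factorial_ne_zero
  have h2 : ((k-i).factorial : ℂ) ≠ 0 := by exact_mod_cast (k-i).factorial_ne_zero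
  have h3 : (k.factorial : ℂ) ≠ 0 := by exact_mod_cast k.factorial_ne_zero
  field_simp
  linear_combination (iteratedDeriv i u 0 * iteratedDeriv (k - i) v 0) * this

lemma kie_coeff (p : Polynomial ℂ) (k : ℕ) :
    iteratedDeriv k (fun z => p.eval z) 0 / k.factorial = p.coeff k := by
  have h3 : (k.factorial : ℂ) ≠ 0 := by exact_mod_cast k.factorial_ne_zero
  have : ∀ (k : ℕ) (p : Polynomial ℂ), iteratedDeriv k (fun z => p.eval z) = fun z => (Polynomial.derivative^[k] p).eval z := by
    intro k
    induction k with
    | zero => intro p; simp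
    | succ k ih =>
      intro p
      rw [iteratedDeriv_succ']
      have : deriv (fun z => p.eval z) = fun z => p.derivative.eval z := by
        ext z; exact p.deriv
      rw [this, ih]; rfl
  rw [this]
  simp only
  rw [← Polynomial.coeff_zero_eq_eval_zero, Polynomial.coeff_iterate_derivative]
  simp [Nat.descFactorial_self]
  field_simp

lemma kie_carleman (p : Polynomial ℂ) (d : ℕ) :
    ∑ k ∈ range d, ‖p.coeff k‖ ^ 2 / (k + 1) ≤
      (Real.circleAverage (fun z => ‖p.eval z‖) 0 1) ^ 2 := by
  obtain ⟨u, v, hu, hv, h1, h2⟩ := KieFac.poly p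
  set b : ℕ → ℂ := fun k => iteratedDeriv k u 0 / k.factorial with hb
  set c : ℕ → ℂ := fun k => iteratedDeriv k v 0 / k.factorial with hc
  have hcoef : ∀ k, p.coeff k = ∑ x ∈ antidiagonal k, b x.1 * c x.2 := by
    intro k
    rw [← kie_coeff, kie_conv hu hv h1, Finset.Nat.sum_antidiagonal_eq_sum_range_succ_mk]
  have hk : ∀ k : ℕ, ‖p.coeff k‖ ^ 2 / (k + 1) ≤ ∑ x ∈ antidiagonal k, ‖b x.1‖ ^ 2 * ‖c x.2‖ ^ 2 := by
    intro k
    rw [div_le_iff₀ (by positivity), hcoef]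
    calc ‖∑ x ∈ antidiagonal k, b x.1 * c x.2‖ ^ 2
        ≤ (∑ x ∈ antidiagonal k, ‖b x.1‖ * ‖c x.2‖) ^ 2 := by
          gcongr
          refine (norm_sum_le _ _).trans (le_of_eq ?_)
          simp
      _ ≤ (#(antidiagonal k) : ℝ) * ∑ x ∈ antidiagonal k, (‖b x.1‖ * ‖c x.2‖) ^ 2 :=
          sq_sum_le_card_mul_sum_sq
      _ = _ := by
          simp [mul_pow, mul_comm]
  have hA : Real.circleAverage (fun z => ‖u z‖ ^ 2) 0 1 = Real.circleAverage (fun z => ‖p.eval z‖) 0 1 := by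
    apply Real.circleAverage_congr_sphere
    intro z hz
    have hz' : z ∈ Metric.sphere (0:ℂ) 1 := by simpa using hz
    simp only at h1 ⊢
    rw [h1 z (Metric.sphere_subset_closedBall hz'), norm_mul, ← h2 z hz', sq]
  have hB : Real.circleAverage (fun z => ‖v z‖ ^ 2) 0 1 = Real.circleAverage (fun z => ‖p.eval z‖) 0 1 := by
    apply Real.circleAverage_congr_sphere
    intro z hz
    have hz' : z ∈ Metric.sphere (0:ℂ) 1 := by simpa using hz
    simp only at h1 ⊢
    rw [h1 z (Metric.sphere_subset_closedBall hz'), norm_mul, h2 z hz', sq]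
  have b1 := kie_bessel hu d
  have b2 := kie_bessel hv d
  rw [hA] at b1
  rw [hB] at b2
  calc _ ≤ ∑ k ∈ range d, ∑ x ∈ antidiagonal k, ‖b x.1‖ ^ 2 * ‖c x.2‖ ^ 2 := sum_le_sum fun k _ => hk k
    _ ≤ ∑ x ∈ range d ×ˢ range d, ‖b x.1‖ ^ 2 * ‖c x.2‖ ^ 2 := by
      rw [← Finset.sum_biUnion]
      · apply sum_le_sum_of_subset_of_nonneg
        · intro x hx
          simp at hx ⊢
          omega
        · intros; positivity
      · intro i _ j _ hij
        rw [Function.onFun, Finset.disjoint_left]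
        intro x hx hx'
        simp at hx hx'
        omega
    _ = (∑ k ∈ range d, ‖b k‖ ^ 2) * (∑ k ∈ range d, ‖c k‖ ^ 2) := by
      rw [Finset.sum_mul_sum, Finset.sum_product]
    _ ≤ _ := by
      rw [sq]
      gcongr
      exact le_trans (sum_nonneg fun _ _ => by positivity) b1

lemma kie_carleman' {d : ℕ} (a : Fin d → ℂ) :
    ∑ k : Fin d, ‖a k‖ ^ 2 / ((k : ℕ) + 1) ≤
      (Real.circleAverage (fun z => ‖∑ k : Fin d, a k * z ^ (k : ℕ)‖) 0 1) ^ 2 := by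
  have h := kie_carleman (∑ k : Fin d, Polynomial.monomial (k : ℕ) (a k)) d
  have hc : ∀ k : Fin d, (∑ k : Fin d, Polynomial.monomial (k : ℕ) (a k)).coeff k = a k := by
    intro k
    simp only [Polynomial.finsetSum_coeff, Polynomial.coeff_monomial, Fin.val_inj]
    simp
  rw [Finset.sum_range] at h
  simp only [hc] at h
  simpa [Polynomial.eval_finsetSum] using h

lemma kie_ci {f : ℂ → ℝ} (hf : Continuous f) : CircleIntegrable f 0 1 :=
  hf.continuousOn.circleIntegrable zero_le_one

/-- one-variable vector valued step -/
lemma kie_step {J E : Type*} [Fintype J] [Fintype E] {d : ℕ} (a : J → E → Fin d → ℂ)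
    (w : E → ℝ) (hw : ∀ e, 0 ≤ w e) (M : ℝ)
    (h : ∀ z : ℂ, ‖z‖ = 1 →
      ∑ j, Real.sqrt (∑ e, w e * ‖∑ k : Fin d, a j e k * z ^ (k : ℕ)‖ ^ 2) ≤ M) :
    ∑ j, Real.sqrt (∑ e, w e * ∑ k : Fin d, ‖a j e k‖ ^ 2 / ((k : ℕ) + 1)) ≤ M := by
  set F : J → E → ℂ → ℝ := fun j e z => ‖∑ k : Fin d, a j e k * z ^ (k : ℕ)‖ with hF
  set G : J → ℂ → ℝ := fun j z => Real.sqrt (∑ e, w e * F j e z ^ 2) with hG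
  have cF : ∀ j e, Continuous (F j e) := by intro j e; simp only [hF]; fun_prop
  have cG : ∀ j, Continuous (G j) := by
    intro j; simp only [hG]
    refine Real.continuous_sqrt.comp (continuous_finsetSum _ fun e _ => ?_)
    have := cF j e
    fun_prop
  have hj : ∀ j, Real.sqrt (∑ e, w e * ∑ k : Fin d, ‖a j e k‖ ^ 2 / ((k : ℕ) + 1)) ≤
      Real.circleAverage (G j) 0 1 := by
    intro j
    set X : E → ℝ := fun e => Real.circleAverage (F j e) 0 1 with hX
    set S := ∑ e, w e * X e ^ 2 with hS
    have hS0 : 0 ≤ S := sum_nonneg fun e _ => mul_nonneg (hw e) (sq_nonneg _)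
    have h1 : Real.sqrt (∑ e, w e * ∑ k : Fin d, ‖a j e k‖ ^ 2 / ((k : ℕ) + 1)) ≤ Real.sqrt S := by
      apply Real.sqrt_le_sqrt
      exact sum_le_sum fun e _ => mul_le_mul_of_nonneg_left (kie_carleman' (a j e)) (hw e)
    refine h1.trans ?_
    have hS1 : S = Real.circleAverage (fun z => ∑ e, (w e * X e) * F j e z) 0 1 := by
      rw [Real.circleAverage_fun_sum]
      · refine sum_congr rfl fun e _ => ?_
        have := Real.circleAverage_fun_smul (a := w e * X e) (f := F j e) (c := 0) (R := 1)
        simp only [smul_eq_mul] at this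
        rw [this]
        change w e * X e ^ 2 = w e * X e * X e
        ring
      · intro e _
        have := cF j e
        exact kie_ci (by fun_prop)
    have hS2 : S ≤ Real.sqrt S * Real.circleAverage (G j) 0 1 := by
      have := Real.circleAverage_fun_smul (a := Real.sqrt S) (f := G j) (c := 0) (R := 1)
      simp only [smul_eq_mul] at this
      rw [← this]
      conv_lhs => rw [hS1]
      apply Real.circleAverage_mono
      · refine kie_ci (continuous_finsetSum _ fun e _ => ?_)
        have := cF j e
        fun_prop
      · have := cG j
        exact kie_ci (by fun_prop)
      · intro z _
        have := Real.sum_mul_le_sqrt_mul_sqrt univ (fun e => Real.sqrt (w e) * X e)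
          (fun e => Real.sqrt (w e) * F j e z)
        simp only [mul_pow, Real.sq_sqrt (hw _)] at this
        refine le_trans (le_of_eq ?_) this
        refine sum_congr rfl fun e _ => ?_
        have := Real.mul_self_sqrt (hw e)
        linear_combination (-(X e * F j e z)) * this
    rcases eq_or_lt_of_le hS0 with h0 | h0
    · rw [← h0]; simp
      exact Real.circleAverage_nonneg_of_nonneg fun z _ => Real.sqrt_nonneg _
    · have hp := Real.sqrt_pos.2 h0
      have := Real.mul_self_sqrt hS0
      nlinarith
  calc _ ≤ ∑ j, Real.circleAverage (G j) 0 1 := sum_le_sum fun j _ => hj j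
    _ = Real.circleAverage (fun z => ∑ j, G j z) 0 1 := by
      rw [Real.circleAverage_fun_sum]
      intro j _
      exact kie_ci (cG j)
    _ ≤ M := by
      apply Real.circleAverage_mono_on_of_le_circle
      · exact kie_ci (continuous_finsetSum _ fun j _ => cG j)
      · intro z hz
        exact h z (by simpa using hz)

lemma kie_helson {J : Type*} [Fintype J] (d : ℕ) (M : ℝ) : ∀ (N : ℕ) (c : J → (Fin N → Fin d) → ℂ),
    (∀ z : Fin N → ℂ, (∀ i, ‖z i‖ = 1) → ∑ j, ‖∑ β, c j β * ∏ i, z i ^ (β i : ℕ)‖ ≤ M) →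
    ∑ j, Real.sqrt (∑ β : Fin N → Fin d, (∏ i, (((β i : ℕ) : ℝ) + 1))⁻¹ * ‖c j β‖ ^ 2) ≤ M := by
  intro N
  induction N with
  | zero =>
    intro c h
    have := h (fun i => i.elim0) (fun i => i.elim0)
    simpa using this
  | succ N ih =>
    intro c h
    have key := kie_step (J := J) (E := Fin N → Fin d) (d := d)
      (fun j β k => c j (Fin.cons k β)) (fun β => (∏ i, (((β i : ℕ) : ℝ) + 1))⁻¹)
      (fun β => by positivity) M (by
        intro z hz
        refine ih (fun j β => ∑ k : Fin d, c j (Fin.cons k β) * z ^ (k : ℕ)) ?_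
        intro y hy
        refine le_trans (le_of_eq ?_) (h (Fin.cons z y) ?_)
        · refine sum_congr rfl fun j _ => ?_
          congr 1
          rw [← (Fin.consEquiv (fun _ : Fin (N+1) => Fin d)).sum_comp, Fintype.sum_prod_type_right]
          refine sum_congr rfl fun β _ => ?_
          rw [Finset.sum_mul]
          refine sum_congr rfl fun k _ => ?_
          simp [Fin.consEquiv, Fin.prod_univ_succ, mul_assoc]
        · intro i
          refine Fin.cases ?_ ?_ i
          · simpa using hz
          · simpa using hy)
    refine le_trans (le_of_eq ?_) key
    refine sum_congr rfl fun j _ => ?_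
    congr 1
    rw [← (Fin.consEquiv (fun _ : Fin (N+1) => Fin d)).sum_comp, Fintype.sum_prod_type_right]
    refine sum_congr rfl fun β _ => ?_
    rw [Finset.mul_sum]
    refine sum_congr rfl fun k _ => ?_
    simp [Fin.consEquiv, Fin.prod_univ_succ]
    ring

lemma kie_expand {N : ℕ} {ι : Type*} [Fintype ι] [DecidableEq ι]
    (L : MultilinearMap ℂ (fun _ : ι => Fin N → ℂ) ℂ) (z : ι → Fin N → ℂ) :
    L z = ∑ t : ι → Fin N, (∏ i, z i (t i)) * L (fun i => Pi.single (t i) 1) := by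
  have h : z = fun i => ∑ r, (z i r) • (Pi.single r (1:ℂ) : Fin N → ℂ) := by
    funext i
    exact pi_eq_sum_univ' (z i)
  conv_lhs => rw [h]
  rw [L.map_sum]
  refine sum_congr rfl fun t _ => ?_
  rw [L.map_smul_univ (fun i => z i (t i)) (fun i => (Pi.single (t i) (1:ℂ) : Fin N → ℂ)), smul_eq_mul]

lemma kie_continuous {N : ℕ} {ι : Type*} [Fintype ι] [DecidableEq ι]
    (L : MultilinearMap ℂ (fun _ : ι => Fin N → ℂ) ℂ) : Continuous L := by
  have : (L : (ι → Fin N → ℂ) → ℂ) = fun z => ∑ t : ι → Fin N, (∏ i, z i (t i)) * L (fun i => Pi.single (t i) 1) :=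
    funext (kie_expand L)
  rw [this]
  fun_prop

lemma kie_harris {n N : ℕ} (hn : 1 ≤ n)
    (L : MultilinearMap ℂ (fun _ : Fin (n + 1) => Fin N → ℂ) ℂ)
    (hsym : ∀ (σ : Equiv.Perm (Fin (n + 1))) (z : Fin (n + 1) → Fin N → ℂ), L (z ∘ σ) = L z)
    (M : ℝ) (hM : ∀ z : Fin N → ℂ, (∀ j, ‖z j‖ ≤ 1) → ‖L fun _ => z‖ ≤ M)
    (z w : Fin N → ℂ) (hz : ∀ j, ‖z j‖ ≤ 1) (hw : ∀ j, ‖w j‖ ≤ 1) :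
    ‖L (Fin.snoc (fun _ => z) w)‖ ≤ (((n : ℝ) + 1) / n) ^ n * M := by
  have hn0 : (0:ℝ) < n := by exact_mod_cast hn
  let L' : ContinuousMultilinearMap ℂ (fun _ : Fin (n + 1) => Fin N → ℂ) ℂ := ⟨L, kie_continuous L⟩
  have hupd : ∀ i, L (Function.update (fun _ => z) i w) = L (Fin.snoc (fun _ => z) w) := by
    intro i
    rw [← hsym (Equiv.swap i (Fin.last n)) (Fin.snoc (fun _ => z) w)]
    congr 1
    have hs : (Fin.snoc (fun _ => z) w : Fin (n+1) → Fin N → ℂ) = Function.update (fun _ => z) (Fin.last n) w := by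
      funext k
      refine Fin.lastCases ?_ (fun k => ?_) k
      · simp
      · simp [Fin.snoc_castSucc, Function.update_of_ne (Fin.castSucc_lt_last k).ne]
    rw [hs]
    funext k
    simp only [Function.comp, Function.update_apply]
    by_cases hk : k = i
    · simp [hk]
    · have : Equiv.swap i (Fin.last n) k ≠ Fin.last n := by
        intro h
        apply hk
        have := congrArg (Equiv.swap i (Fin.last n)) h
        simpa using this
      simp [hk, this]
  have hder : HasDerivAt (fun l : ℂ => L (fun _ => z + l • w))
      (((n:ℂ) + 1) * L (Fin.snoc (fun _ => z) w)) 0 := by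
    have h1 : HasDerivAt (fun l : ℂ => (fun _ : Fin (n+1) => z + l • w)) (fun _ => w) 0 := by
      rw [hasDerivAt_pi]
      intro i
      have := ((hasDerivAt_id (0:ℂ)).smul_const w).const_add z
      simpa using this
    have h2 := (L'.hasFDerivAt (x := fun _ : Fin (n+1) => z + (0:ℂ) • w)).comp_hasDerivAt 0 h1
    rw [ContinuousMultilinearMap.linearDeriv_apply] at h2
    have : ∀ i, L' (Function.update (fun _ => z + (0:ℂ) • w) i w) = L (Fin.snoc (fun _ => z) w) := by
      intro i; rw [← hupd i, zero_smul, add_zero]; rfl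
    simp only [this] at h2
    rw [sum_const, card_univ, Fintype.card_fin, nsmul_eq_mul, Nat.cast_add, Nat.cast_one] at h2
    exact h2
  have hdiff : Differentiable ℂ (fun l : ℂ => L (fun _ => z + l • w)) := by
    intro l
    have h1 : DifferentiableAt ℂ (fun l : ℂ => (fun _ : Fin (n+1) => z + l • w)) l := by fun_prop
    exact ((L'.hasFDerivAt (x := fun _ : Fin (n+1) => z + l • w)).differentiableAt).comp l h1
  have hR : (0:ℝ) < 1 / n := by positivity
  set q : ℝ := ((n:ℝ) + 1) / n with hq
  have hq0 : 0 < q := by positivity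
  have hb : ∀ l ∈ Metric.sphere (0:ℂ) (1 / n), ‖L (fun _ => z + l • w)‖ ≤ q ^ (n+1) * M := by
    intro l hl
    have hl' : ‖l‖ = 1 / n := by simpa using hl
    have e : (fun _ : Fin (n+1) => z + l • w) = fun i => ((q:ℂ)) • (fun _ : Fin (n+1) => ((q:ℂ))⁻¹ • (z + l • w)) i := by
      funext i
      have : (q:ℂ) ≠ 0 := by exact_mod_cast hq0.ne'
      simp [smul_smul, this]
    rw [e, L.map_smul_univ (fun _ => (q:ℂ)), norm_smul]
    simp only [prod_const, card_univ, Fintype.card_fin, norm_pow, Complex.norm_real, Real.norm_eq_abs, abs_of_pos hq0]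
    gcongr
    apply hM
    intro j
    simp only [Pi.smul_apply, Pi.add_apply, smul_eq_mul, norm_mul, norm_inv, Complex.norm_real, Real.norm_eq_abs, abs_of_pos hq0]
    rw [inv_mul_le_iff₀ hq0, mul_one]
    calc ‖z j + l * w j‖ ≤ ‖z j‖ + ‖l‖ * ‖w j‖ := by
          rw [← norm_mul]; exact norm_add_le _ _
      _ ≤ 1 + (1 / n) * 1 := by
          rw [hl']; gcongr
          · exact hz j
          · exact hw j
      _ = q := by rw [hq]; field_simp
  have hC := Complex.norm_deriv_le_of_forall_mem_sphere_norm_le hR hdiff.diffContOnCl hb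
  rw [hder.deriv, norm_mul] at hC
  have e1 : ‖(n:ℂ) + 1‖ = (n:ℝ) + 1 := by
    have : (n:ℂ) + 1 = ((n+1 : ℕ) : ℂ) := by push_cast; rfl
    rw [this, Complex.norm_natCast]; push_cast; rfl
  rw [e1] at hC
  have e2 : q ^ (n+1) * M / (1 / n) = ((n:ℝ) + 1) * (q ^ n * M) := by
    rw [pow_succ]
    have : q * n = n + 1 := by rw [hq]; field_simp
    rw [div_div_eq_mul_div, div_one]
    linear_combination (q ^ n * M) * this
  rw [e2] at hC
  exact le_of_mul_le_mul_left hC (by positivity)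

lemma kie_harris_sum {n N : ℕ} (hn : 1 ≤ n)
    (L : MultilinearMap ℂ (fun _ : Fin (n + 1) => Fin N → ℂ) ℂ)
    (hsym : ∀ (σ : Equiv.Perm (Fin (n + 1))) (z : Fin (n + 1) → Fin N → ℂ), L (z ∘ σ) = L z)
    (M : ℝ) (hM : ∀ z : Fin N → ℂ, (∀ j, ‖z j‖ ≤ 1) → ‖L fun _ => z‖ ≤ M)
    (z : Fin N → ℂ) (hz : ∀ j, ‖z j‖ ≤ 1) :
    ∑ j, ‖L (Fin.snoc (fun _ => z) (Pi.single j 1))‖ ≤ (((n : ℝ) + 1) / n) ^ n * M := by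
  have hph : ∀ c : ℂ, ∃ w : ℂ, ‖w‖ ≤ 1 ∧ w * c = (‖c‖ : ℂ) := by
    intro c
    by_cases hc : c = 0
    · exact ⟨0, by simp, by simp [hc]⟩
    · have : (‖c‖ : ℂ) ≠ 0 := by exact_mod_cast norm_ne_zero_iff.2 hc
      refine ⟨‖c‖ / c, ?_, by field_simp⟩
      rw [norm_div, Complex.norm_real, norm_norm]
      exact div_self_le_one _
  choose W hW1 hW2 using hph
  set w : Fin N → ℂ := fun j => W (L (Fin.snoc (fun _ => z) (Pi.single j 1))) with hw
  have h := kie_harris hn L hsym M hM z w hz (fun j => hW1 _)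
  refine le_trans (le_of_eq ?_) h
  have e : L (Fin.snoc (fun _ => z) w) = ∑ j, w j * L (Fin.snoc (fun _ => z) (Pi.single j 1)) := by
    have : ∀ v, L (Fin.snoc (fun _ => z) v) = L.curryRight (fun _ => z) v := fun v => rfl
    simp only [this]
    conv_lhs => rw [pi_eq_sum_univ' w]
    rw [map_sum]
    simp
  rw [e]
  simp only [hw, hW2]
  rw [← Complex.ofReal_sum, Complex.norm_real, Real.norm_eq_abs, abs_of_nonneg]
  exact sum_nonneg fun _ _ => norm_nonneg _

/-- The multi-index of a tuple. -/
def kieIdx {n N : ℕ} (t : Fin n → Fin N) : Fin N → ℕ := fun r => (univ.filter fun l => t l = r).card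

lemma kieIdx_sum {n N : ℕ} (t : Fin n → Fin N) : ∑ r, kieIdx t r = n := by
  have := Finset.card_eq_sum_card_fiberwise (f := t) (s := univ) (t := univ) (by simp)
  simpa [kieIdx] using this.symm

lemma kieIdx_prod {n N : ℕ} {R : Type*} [CommMonoid R] (t : Fin n → Fin N) (z : Fin N → R) :
    ∏ l, z (t l) = ∏ r, z r ^ kieIdx t r := by
  rw [← Finset.prod_fiberwise' univ t z]
  simp [kieIdx]

lemma kie_count {n N : ℕ} (β : Fin N → ℕ) (hβ : ∑ r, β r = n) :
    (((univ.filter fun t : Fin n → Fin N => kieIdx t = β).card : ℕ) : ℝ) =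
      (n.factorial : ℝ) / ∏ r, ((β r).factorial : ℝ) := by
  classical
  have h := MvPolynomial.coeff_sum_X_pow_of_fintype (R := ℕ) (Finsupp.equivFunOnFinite.symm β) n
  rw [Finset.sum_pow', MvPolynomial.coeff_sum] at h
  have h1 : ∀ t : Fin n → Fin N, MvPolynomial.coeff (Finsupp.equivFunOnFinite.symm β)
      (∏ l, (MvPolynomial.X (t l) : MvPolynomial (Fin N) ℕ)) = if kieIdx t = β then 1 else 0 := by
    intro t
    rw [kieIdx_prod t (fun r => (MvPolynomial.X r : MvPolynomial (Fin N) ℕ)), MvPolynomial.coeff_prod_X_pow]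
    congr 1
    simp only [eq_iff_iff]
    rw [Finsupp.ext_iff, funext_iff]
    simp [eq_comm]
  simp only [h1] at h
  have h2 : (Finsupp.equivFunOnFinite.symm β).sum (fun _ m => m) = n := by
    rw [Finsupp.sum_fintype _ _ (by simp)]
    simpa using hβ
  rw [if_pos h2] at h
  have h3 : (univ.filter fun t : Fin n → Fin N => kieIdx t = β).card = Nat.multinomial univ β := by
    rw [Finset.card_filter]
    simp only [Fintype.piFinset_univ] at h
    rw [h]
    have := Finsupp.multinomial_of_support_subset (d := Finsupp.equivFunOnFinite.symm β) (Finset.subset_univ _)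
    rw [← this]
    rfl
  rw [h3, eq_div_iff (by positivity)]
  have := Nat.multinomial_spec univ β
  rw [hβ] at this
  rw [← this]
  push_cast
  ring

lemma kie_poly {n N : ℕ} (L : MultilinearMap ℂ (fun _ : Fin (n + 1) => Fin N → ℂ) ℂ)
    (A : (Fin N → ℕ) → Fin N → ℂ)
    (hA : ∀ (β : Fin N → ℕ) (j : Fin N) (t : Fin n → Fin N),
      (∀ r, (Finset.univ.filter fun l => t l = r).card = β r) →
      A β j = L (Fin.snoc (fun l => Pi.single (t l) (1 : ℂ)) (Pi.single j 1)))
    (z : Fin N → ℂ) (j : Fin N) :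
    L (Fin.snoc (fun _ => z) (Pi.single j 1)) = ∑ β ∈ Finset.Nat.antidiagonalTuple N n,
      (((n.factorial : ℝ) / ∏ r, ((β r).factorial : ℝ) : ℝ) : ℂ) * A β j * ∏ r, z r ^ β r := by
  have h := kie_expand ((LinearMap.applyₗ (Pi.single j 1 : Fin N → ℂ)).compMultilinearMap L.curryRight)
    (fun _ => z)
  have h' : L (Fin.snoc (fun _ => z) (Pi.single j 1)) = ∑ t : Fin n → Fin N,
      (∏ l, z (t l)) * L (Fin.snoc (fun l => Pi.single (t l) (1 : ℂ)) (Pi.single j 1)) := h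
  rw [h']
  have h2 : ∀ t : Fin n → Fin N,
      (∏ l, z (t l)) * L (Fin.snoc (fun l => Pi.single (t l) (1 : ℂ)) (Pi.single j 1)) =
      A (kieIdx t) j * ∏ r, z r ^ kieIdx t r := by
    intro t
    rw [← hA (kieIdx t) j t (fun r => rfl), kieIdx_prod, mul_comm]
  simp only [h2]
  rw [← Finset.sum_fiberwise_of_maps_to' (s := univ) (t := Finset.Nat.antidiagonalTuple N n) (g := kieIdx)
    (fun t _ => by rw [Finset.Nat.mem_antidiagonalTuple]; exact kieIdx_sum t)
    (fun β => A β j * ∏ r, z r ^ β r)]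
  refine sum_congr rfl fun β hβ => ?_
  rw [Finset.Nat.mem_antidiagonalTuple] at hβ
  rw [← kie_count β hβ, sum_const, nsmul_eq_mul]
  push_cast
  ring

lemma kie_box {R : Type*} [AddCommMonoid R] (n N : ℕ) (g : (Fin N → ℕ) → R) :
    ∑ β ∈ Finset.Nat.antidiagonalTuple N n, g β =
      ∑ β : Fin N → Fin (n+1), if ∑ r, (β r : ℕ) = n then g (fun r => β r) else 0 := by
  rw [← Finset.sum_filter]
  symm
  refine Finset.sum_bij (fun β _ r => (β r : ℕ)) ?_ ?_ ?_ ?_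
  · intro β hβ
    simpa [Finset.Nat.mem_antidiagonalTuple] using hβ
  · intro β _ β' _ h
    funext r
    exact Fin.ext (congrFun h r)
  · intro β hβ
    rw [Finset.Nat.mem_antidiagonalTuple] at hβ
    refine ⟨fun r => ⟨β r, ?_⟩, by simpa using hβ, rfl⟩
    have := Finset.single_le_sum (f := β) (fun _ _ => Nat.zero_le _) (mem_univ r)
    omega
  · intros; rfl

/-- **Key intermediate estimate** in the proof of the main theorem. Let `m = n+1 ≥ 2`,
`L` a symmetric `m`-linear form on `ℂ^N`, `P(z) = L(z,…,z)`. For a multi-index `β`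
with `|β| = m-1 = n` let `C_β = n!/(β₁!⋯β_N!)` and let `A β j = L(e^β, e_j)` denote
`L` evaluated at the basis vector `e_r` repeated `β_r` times and `e_j` in the last
argument (encoded by the hypothesis `hA`, using any tuple `t` whose multi-index is `β`).
Then `∑_j (∑_{|β|=n} C_β² |L(e^β,e_j)|² / ∏_r (β_r+1))^{1/2}
  ≤ (m/(m-1))^{m-1} · sup_{polydisc} |P|`. -/
theorem key_intermediate_estimate (n N : ℕ) (hn : 1 ≤ n) (hN : 1 ≤ N)
    (L : MultilinearMap ℂ (fun _ : Fin (n + 1) => Fin N → ℂ) ℂ)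
    (hsym : ∀ (σ : Equiv.Perm (Fin (n + 1))) (z : Fin (n + 1) → Fin N → ℂ),
      L (z ∘ σ) = L z)
    (A : (Fin N → ℕ) → Fin N → ℂ)
    (hA : ∀ (β : Fin N → ℕ) (j : Fin N) (t : Fin n → Fin N),
      (∀ r, (Finset.univ.filter fun l => t l = r).card = β r) →
      A β j = L (Fin.snoc (fun l => Pi.single (t l) (1 : ℂ)) (Pi.single j 1))) :
    ∑ j : Fin N, Real.sqrt (∑ β ∈ Finset.Nat.antidiagonalTuple N n,
        ((n.factorial : ℝ) / ∏ r, ((β r).factorial : ℝ)) ^ 2 *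
          ‖A β j‖ ^ 2 / ∏ r, ((β r : ℝ) + 1))
      ≤ (((n : ℝ) + 1) / n) ^ n *
        ⨆ z ∈ {z : Fin N → ℂ | ∀ j, ‖z j‖ ≤ 1},
          ‖(L fun _ => z)‖ := by
  set M := ⨆ z ∈ {z : Fin N → ℂ | ∀ j, ‖z j‖ ≤ 1}, ‖(L fun _ => z)‖ with hMdef
  have hM : ∀ z : Fin N → ℂ, (∀ j, ‖z j‖ ≤ 1) → ‖L fun _ => z‖ ≤ M := by
    have hc : Continuous fun z : Fin N → ℂ => L fun _ => z :=
      (kie_continuous L).comp (by fun_prop)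
    obtain ⟨C, hC⟩ := (isCompact_closedBall (0 : Fin N → ℂ) 1).exists_bound_of_continuousOn
      hc.continuousOn
    have hC' : ∀ z : Fin N → ℂ, (∀ j, ‖z j‖ ≤ 1) → ‖L fun _ => z‖ ≤ C := fun z hz =>
      hC z (by rw [mem_closedBall_zero_iff]; exact (pi_norm_le_iff_of_nonneg zero_le_one).2 hz)
    have hC0 : 0 ≤ C := (norm_nonneg _).trans (hC' 0 (by simp))
    intro z hz
    have hbd : BddAbove (Set.range fun z : Fin N → ℂ =>
        ⨆ (_ : z ∈ {z : Fin N → ℂ | ∀ j, ‖z j‖ ≤ 1}), ‖(L fun _ => z)‖) := by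
      refine ⟨C, ?_⟩
      rintro _ ⟨y, rfl⟩
      exact Real.iSup_le (fun hy => hC' y hy) hC0
    refine le_trans (le_of_eq ?_) (le_ciSup hbd z)
    have hz' : z ∈ {z : Fin N → ℂ | ∀ j, ‖z j‖ ≤ 1} := hz
    exact (ciSup_pos (f := fun _ => ‖L fun _ => z‖) hz').symm
  have key := kie_helson (J := Fin N) (n+1) ((((n : ℝ) + 1) / n) ^ n * M) N
    (fun j β => if ∑ r, (β r : ℕ) = n then
      (((n.factorial : ℝ) / ∏ r, ((β r : ℕ).factorial : ℝ) : ℝ) : ℂ) * A (fun r => β r) j else 0) (by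
      intro z hz
      refine le_trans (le_of_eq ?_) (kie_harris_sum hn L hsym M hM z (fun j => (hz j).le))
      refine sum_congr rfl fun j _ => ?_
      rw [kie_poly L A hA, kie_box]
      simp only [ite_mul, zero_mul])
  refine le_trans (le_of_eq ?_) key
  refine sum_congr rfl fun j _ => ?_
  rw [kie_box]
  congr 1
  refine sum_congr rfl fun β _ => ?_
  split_ifs
  · rw [norm_mul, Complex.norm_real, Real.norm_eq_abs, mul_pow, sq_abs]
    ring
  · simp
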